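/- Let G be an area metric on ℝ⁴ with Fresnel tensor 𝒢, and let ξ ∈ (ℝ⁴)* be a covector. If the 4×4 matrix M with entries M^{ab} = (G⁻¹)^{acbd} ξ_c ξ_d (sum over c,d) has rank strictly less than 3, then 𝒢(ξ,ξ,ξ,ξ) = 0. -/

import Mathlib

noncomputable section

/-- First members of the ordered Petrov index pairs `[01],[02],[03],[12],[31],[23]`. -/
def pFst : Fin 6 → Fin 4 := ![0, 0, 0, 1, 3, 2]

/-- Second members of the ordered Petrov index pairs `[01],[02],[03],[12],[31],[23]`. -/
def pSnd : Fin 6 → Fin 4 := ![1, 2, 3, 2, 1, 3]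

/-- The Petrov matrix of a rank-4 covariant tensor on `ℝ⁴`: the symmetric `6 × 6` matrix
of components `G_{abcd}` indexed by the ordered pairs `[01],[02],[03],[12],[31],[23]`. -/
def petrov (G : Fin 4 → Fin 4 → Fin 4 → Fin 4 → ℝ) : Matrix (Fin 6) (Fin 6) ℝ :=
  Matrix.of fun A B => G (pFst A) (pSnd A) (pFst B) (pSnd B)

/-- The totally antisymmetric Levi-Civita symbol on four indices with `ε₀₁₂₃ = 1`. -/
def eps (a b c d : Fin 4) : ℝ :=
  (Matrix.of fun i j => if (![a, b, c, d] : Fin 4 → Fin 4) i = j then (1 : ℝ) else 0).det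

/-- The Petrov index associated to a pair of distinct indices (arbitrary on the diagonal). -/
def bIdx : Fin 4 → Fin 4 → Fin 6 :=
  ![![0, 0, 1, 2], ![0, 0, 3, 4], ![1, 3, 0, 5], ![2, 4, 5, 0]]

/-- The sign relating the tensor component `T_{ab}` to the Petrov component at `bIdx a b`
(`0` on the diagonal); the pair `[31]` is stored in the order `(3,1)`. -/
def bSgn : Fin 4 → Fin 4 → ℝ :=
  ![![0, 1, 1, 1], ![-1, 0, 1, -1], ![-1, -1, 0, 1], ![-1, 1, -1, 0]]

/-- The rank-4 tensor with the area metric symmetries reconstructed from a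
(symmetric) Petrov matrix. -/
def fromPetrov (M : Matrix (Fin 6) (Fin 6) ℝ) : Fin 4 → Fin 4 → Fin 4 → Fin 4 → ℝ :=
  fun a b c d => bSgn a b * bSgn c d * M (bIdx a b) (bIdx c d)

/-- The components `(G⁻¹)^{abcd}` of the inverse area metric, characterized by
`Petrov(G⁻¹) = Petrov(G)⁻¹`. -/
def ginv (G : Fin 4 → Fin 4 → Fin 4 → Fin 4 → ℝ) : Fin 4 → Fin 4 → Fin 4 → Fin 4 → ℝ :=
  fromPetrov (petrov G)⁻¹

/-- The area metric volume form `(ω_G)_{abcd} = |det Petrov(G)|^{1/6} ε_{abcd}`. -/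
def vol (G : Fin 4 → Fin 4 → Fin 4 → Fin 4 → ℝ) (a b c d : Fin 4) : ℝ :=
  |(petrov G).det| ^ ((1 : ℝ) / 6) * eps a b c d

/-- The inverse volume form `(ω_G⁻¹)^{abcd} = |det Petrov(G)|^{-1/6} ε^{abcd}`. -/
def volInv (G : Fin 4 → Fin 4 → Fin 4 → Fin 4 → ℝ) (a b c d : Fin 4) : ℝ :=
  |(petrov G).det| ^ (-(1 : ℝ) / 6) * eps a b c d

/-- The Fresnel polynomial
`𝒢(k,k,k,k) = -(1/24)(ω_G)_{mnpq}(ω_G)_{rstu}(G⁻¹)^{mnra}(G⁻¹)^{bpsc}(G⁻¹)^{dqtu} k_a k_b k_c k_d`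
(all repeated indices summed over `0,…,3`; the symmetrization over `a,b,c,d` in the Fresnel
tensor is immaterial after contraction with `k_a k_b k_c k_d`). -/
def fresnelPoly (G : Fin 4 → Fin 4 → Fin 4 → Fin 4 → ℝ) (k : Fin 4 → ℝ) : ℝ :=
  -(1 / 24) * ∑ m : Fin 4, ∑ n : Fin 4, ∑ p : Fin 4, ∑ q : Fin 4, ∑ r : Fin 4, ∑ s : Fin 4,
      ∑ t : Fin 4, ∑ u : Fin 4, ∑ a : Fin 4, ∑ b : Fin 4, ∑ c : Fin 4, ∑ d : Fin 4,
    vol G m n p q * vol G r s t u * ginv G m n r a * ginv G b p s c * ginv G d q t u *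
      k a * k b * k c * k d

/-- Integer version of the Levi-Civita symbol. -/
def epsZ (a b c d : Fin 4) : ℤ :=
  (((b.val : ℤ) - a.val) * ((c.val : ℤ) - a.val) * ((d.val : ℤ) - a.val) *
    ((c.val : ℤ) - b.val) * ((d.val : ℤ) - b.val) * ((d.val : ℤ) - c.val)) / 12

/-- Kronecker symbol. -/
def dl (a b : Fin 4) : ℤ := if a = b then 1 else 0

lemma epsZ_expand : ∀ a b c d : Fin 4, epsZ a b c d =
    dl a 0 * (dl b 1 * (dl c 2 * dl d 3 - dl c 3 * dl d 2)
      - dl b 2 * (dl c 1 * dl d 3 - dl c 3 * dl d 1)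
      + dl b 3 * (dl c 1 * dl d 2 - dl c 2 * dl d 1))
    - dl a 1 * (dl b 0 * (dl c 2 * dl d 3 - dl c 3 * dl d 2)
      - dl b 2 * (dl c 0 * dl d 3 - dl c 3 * dl d 0)
      + dl b 3 * (dl c 0 * dl d 2 - dl c 2 * dl d 0))
    + dl a 2 * (dl b 0 * (dl c 1 * dl d 3 - dl c 3 * dl d 1)
      - dl b 1 * (dl c 0 * dl d 3 - dl c 3 * dl d 0)
      + dl b 3 * (dl c 0 * dl d 1 - dl c 1 * dl d 0))
    - dl a 3 * (dl b 0 * (dl c 1 * dl d 2 - dl c 2 * dl d 1)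
      - dl b 1 * (dl c 0 * dl d 2 - dl c 2 * dl d 0)
      + dl b 2 * (dl c 0 * dl d 1 - dl c 1 * dl d 0)) := by
  decide +kernel

lemma eps_eq (a b c d : Fin 4) : eps a b c d = (epsZ a b c d : ℝ) := by
  have hd : ∀ a b : Fin 4, (if a = b then (1 : ℝ) else 0) = (dl a b : ℝ) := by
    intro a b; unfold dl; push_cast; rfl
  rw [epsZ_expand]
  unfold eps
  simp only [hd]
  generalize dl = f
  rw [Matrix.det_succ_row_zero]
  simp [Fin.sum_univ_four, Matrix.det_fin_three, Fin.succAbove, Fin.succ]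
  ring

set_option maxRecDepth 100000 in
lemma epsZ_five : ∀ l i m n p q : Fin 4,
    (if l = i then epsZ m n p q else 0) =
      (if l = m then epsZ i n p q else 0) + (if l = n then epsZ m i p q else 0) +
      (if l = p then epsZ m n i q else 0) + (if l = q then epsZ m n p i else 0) := by
  decide +kernel

lemma eps_five (x : Fin 4 → ℝ) (i m n p q : Fin 4) :
    x i * eps m n p q = x m * eps i n p q + x n * eps m i p q + x p * eps m n i q
      + x q * eps m n p i := by
  have h : ∀ l, x l * (if l = i then eps m n p q else 0) =
      x l * ((if l = m then eps i n p q else 0) + (if l = n then eps m i p q else 0) +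
      (if l = p then eps m n i q else 0) + (if l = q then eps m n p i else 0)) := by
    intro l
    have := congrArg (Int.cast : ℤ → ℝ) (epsZ_five l i m n p q)
    push_cast at this
    simp only [eps_eq]
    rw [this]
  have h2 := Finset.sum_congr (rfl : (Finset.univ : Finset (Fin 4)) = Finset.univ)
    (fun l _ => h l)
  simpa [mul_add, Finset.sum_add_distrib] using h2

/-- Contracting a form with the Levi-Civita symbol and moving a covector through it. -/
lemma contract_zero (x : Fin 4 → ℝ) (hx : x ≠ 0) (T : Fin 4 → Fin 4 → Fin 4 → Fin 4 → ℝ)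
    (h1 : ∀ i, ∑ n, ∑ p, ∑ q, eps i n p q * ∑ m, x m * T m n p q = 0)
    (h2 : ∀ i, ∑ m, ∑ p, ∑ q, eps m i p q * ∑ n, x n * T m n p q = 0)
    (h3 : ∀ i, ∑ m, ∑ n, ∑ q, eps m n i q * ∑ p, x p * T m n p q = 0)
    (h4 : ∀ i, ∑ m, ∑ n, ∑ p, eps m n p i * ∑ q, x q * T m n p q = 0) :
    ∑ m, ∑ n, ∑ p, ∑ q, eps m n p q * T m n p q = 0 := by
  obtain ⟨i, hi⟩ := Function.ne_iff.mp hx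
  refine (mul_eq_zero.mp (?_ : x i * _ = 0)).resolve_left hi
  have e1 : ∑ m, ∑ n, ∑ p, ∑ q, eps i n p q * (x m * T m n p q) = 0 := by
    rw [← h1 i, Finset.sum_comm]
    refine Finset.sum_congr rfl fun n _ => ?_
    rw [Finset.sum_comm]
    refine Finset.sum_congr rfl fun p _ => ?_
    rw [Finset.sum_comm]
    refine Finset.sum_congr rfl fun q _ => ?_
    rw [Finset.mul_sum]
  have e2 : ∑ m, ∑ n, ∑ p, ∑ q, eps m i p q * (x n * T m n p q) = 0 := by
    rw [← h2 i]
    refine Finset.sum_congr rfl fun n _ => ?_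
    rw [Finset.sum_comm]
    refine Finset.sum_congr rfl fun p _ => ?_
    rw [Finset.sum_comm]
    refine Finset.sum_congr rfl fun q _ => ?_
    rw [Finset.mul_sum]
  have e3 : ∑ m, ∑ n, ∑ p, ∑ q, eps m n i q * (x p * T m n p q) = 0 := by
    rw [← h3 i]
    refine Finset.sum_congr rfl fun n _ => ?_
    refine Finset.sum_congr rfl fun p _ => ?_
    rw [Finset.sum_comm]
    refine Finset.sum_congr rfl fun q _ => ?_
    rw [Finset.mul_sum]
  have e4 : ∑ m, ∑ n, ∑ p, ∑ q, eps m n p i * (x q * T m n p q) = 0 := by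
    rw [← h4 i]
    simp only [Finset.mul_sum]
  have : ∀ m n p q, x i * (eps m n p q * T m n p q) =
      eps i n p q * (x m * T m n p q) + eps m i p q * (x n * T m n p q)
      + eps m n i q * (x p * T m n p q) + eps m n p i * (x q * T m n p q) := by
    intro m n p q
    rw [← mul_assoc, eps_five]
    ring
  simp only [Finset.mul_sum, this, Finset.sum_add_distrib, e1, e2, e3, e4, add_zero]

lemma minor_zero (M : Matrix (Fin 4) (Fin 4) ℝ) (h : M.rank < 3) (f g : Fin 3 → Fin 4) :
    (M.submatrix f g).det = 0 := by
  by_contra hd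
  have h1 := Matrix.rank_of_isUnit (M.submatrix f g)
    ((Matrix.isUnit_iff_isUnit_det _).mpr (isUnit_iff_ne_zero.mpr hd))
  have h2 : (M.submatrix f g).rank ≤ M.rank := by
    have e : M.submatrix f g = (1 : Matrix (Fin 4) (Fin 4) ℝ).submatrix f id * M *
        (1 : Matrix (Fin 4) (Fin 4) ℝ).submatrix id g := by
      ext i j
      simp [Matrix.mul_apply, Matrix.one_apply]
    rw [e]
    exact (Matrix.rank_mul_le_left _ _).trans (Matrix.rank_mul_le_right _ _)
  rw [Fintype.card_fin] at h1
  omega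

/-- Contraction of three rows of a low-rank matrix with the Levi-Civita symbol. -/
lemma eps_rows (M : Matrix (Fin 4) (Fin 4) ℝ) (h : M.rank < 3) (a b c j : Fin 4) :
    ∑ r, ∑ s, ∑ u, eps r s u j * (M a r * M b s * M c u) = 0 := by
  have h0 := minor_zero M h ![a, b, c] ![1, 2, 3]
  have h1 := minor_zero M h ![a, b, c] ![0, 2, 3]
  have h2 := minor_zero M h ![a, b, c] ![0, 1, 3]
  have h3 := minor_zero M h ![a, b, c] ![0, 1, 2]
  rw [Matrix.det_fin_three] at h0 h1 h2 h3
  simp only [Matrix.submatrix_apply, Matrix.cons_val_zero, Matrix.cons_val_one,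
    Matrix.cons_val] at h0 h1 h2 h3
  simp only [eps_eq]
  fin_cases j <;> simp [Fin.sum_univ_four, epsZ]
  · linear_combination -h0
  · linear_combination h1
  · linear_combination -h2
  · linear_combination h3

lemma epsZ_swap : ∀ r s t u : Fin 4, epsZ r s t u = - epsZ r s u t := by decide +kernel

lemma eps_swap (r s t u : Fin 4) : eps r s t u = - eps r s u t := by
  simp only [eps_eq]; rw [epsZ_swap]; push_cast; rfl

lemma inner_zero (x : Fin 4 → ℝ) (hx : x ≠ 0) (M : Matrix (Fin 4) (Fin 4) ℝ) (h : M.rank < 3)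
    (hM : ∀ a, ∑ r, x r * M a r = 0) (B : Fin 4 → Fin 4 → Fin 4 → ℝ)
    (h1 : ∀ q u, ∑ t, x t * B q t u = M q u) (h2 : ∀ q t, ∑ u, x u * B q t u = - M q t)
    (m p q : Fin 4) :
    ∑ r, ∑ s, ∑ t, ∑ u, eps r s t u * (M m r * M p s * B q t u) = 0 := by
  refine contract_zero x hx (fun r s t u => M m r * M p s * B q t u) ?_ ?_ ?_ ?_
  · intro i
    refine Finset.sum_eq_zero fun s _ => Finset.sum_eq_zero fun t _ =>
      Finset.sum_eq_zero fun u _ => ?_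
    have : ∑ r, x r * (M m r * M p s * B q t u) = (∑ r, x r * M m r) * (M p s * B q t u) := by
      rw [Finset.sum_mul]; exact Finset.sum_congr rfl fun _ _ => by ring
    rw [this, hM]; ring
  · intro i
    refine Finset.sum_eq_zero fun r _ => Finset.sum_eq_zero fun t _ =>
      Finset.sum_eq_zero fun u _ => ?_
    have : ∑ s, x s * (M m r * M p s * B q t u) = (∑ s, x s * M p s) * (M m r * B q t u) := by
      rw [Finset.sum_mul]; exact Finset.sum_congr rfl fun _ _ => by ring
    rw [this, hM]; ring
  · intro i
    have : ∀ r s u, ∑ t, x t * (M m r * M p s * B q t u) = M m r * M p s * M q u := by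
      intro r s u
      rw [← h1 q u, Finset.mul_sum]; exact Finset.sum_congr rfl fun _ _ => by ring
    simp only [this]
    have e := eps_rows M h m p q i
    rw [← neg_eq_zero, ← e]
    simp only [← Finset.sum_neg_distrib]
    refine Finset.sum_congr rfl fun r _ => Finset.sum_congr rfl fun s _ =>
      Finset.sum_congr rfl fun u _ => ?_
    rw [eps_swap]; ring
  · intro i
    have : ∀ r s t, ∑ u, x u * (M m r * M p s * B q t u) = - (M m r * M p s * M q t) := by
      intro r s t
      have e : M q t = - ∑ u, x u * B q t u := by rw [h2]; ring
      rw [e, mul_neg, neg_neg, Finset.mul_sum]; exact Finset.sum_congr rfl fun _ _ => by ring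
    simp only [this]
    have e := eps_rows M h m p q i
    rw [← neg_eq_zero, ← e]
    simp only [← Finset.sum_neg_distrib]
    refine Finset.sum_congr rfl fun r _ => Finset.sum_congr rfl fun s _ =>
      Finset.sum_congr rfl fun u _ => ?_
    ring

/-- Auxiliary sum. -/
def tAux (A B : Fin 4 → Fin 4 → Fin 4 → ℝ) (M : Matrix (Fin 4) (Fin 4) ℝ)
    (m n p q : Fin 4) : ℝ :=
  ∑ r, ∑ s, ∑ t, ∑ u, eps r s t u * (A m n r * M p s * B q t u)

lemma sum_tAux (y : Fin 4 → ℝ) (f : Fin 4 → Fin 4 → Fin 4 → Fin 4 → Fin 4 → ℝ) :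
    ∑ m, y m * (∑ r, ∑ s, ∑ t, ∑ u, eps r s t u * f m r s t u) =
      ∑ r, ∑ s, ∑ t, ∑ u, eps r s t u * ∑ m, y m * f m r s t u := by
  simp only [Finset.mul_sum]
  rw [Finset.sum_comm]
  refine Finset.sum_congr rfl fun r _ => ?_
  rw [Finset.sum_comm]
  refine Finset.sum_congr rfl fun s _ => ?_
  rw [Finset.sum_comm]
  refine Finset.sum_congr rfl fun t _ => ?_
  rw [Finset.sum_comm]
  refine Finset.sum_congr rfl fun u _ => Finset.sum_congr rfl fun m _ => ?_
  ring

lemma outer_zero (x : Fin 4 → ℝ) (hx : x ≠ 0) (M : Matrix (Fin 4) (Fin 4) ℝ) (h : M.rank < 3)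
    (hM : ∀ a, ∑ r, x r * M a r = 0) (hM' : ∀ a, ∑ r, x r * M r a = 0)
    (A B : Fin 4 → Fin 4 → Fin 4 → ℝ)
    (h0 : ∀ t u, ∑ q, x q * B q t u = 0)
    (h1 : ∀ q u, ∑ t, x t * B q t u = M q u) (h2 : ∀ q t, ∑ u, x u * B q t u = - M q t)
    (h3 : ∀ n r, ∑ m, x m * A m n r = - M n r) (h4 : ∀ m r, ∑ n, x n * A m n r = M m r) :
    ∑ m, ∑ n, ∑ p, ∑ q, eps m n p q * tAux A B M m n p q = 0 := by
  have I := inner_zero x hx M h hM B h1 h2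
  refine contract_zero x hx (tAux A B M) ?_ ?_ ?_ ?_
  · intro i
    refine Finset.sum_eq_zero fun n _ => Finset.sum_eq_zero fun p _ =>
      Finset.sum_eq_zero fun q _ => ?_
    simp only [tAux]
    rw [sum_tAux x (fun m r s t u => A m n r * M p s * B q t u)]
    have : ∀ r s t u, ∑ m, x m * (A m n r * M p s * B q t u) = -(M n r * M p s * B q t u) := by
      intro r s t u
      have e : M n r = - ∑ m, x m * A m n r := by rw [h3]; ring
      rw [e, neg_mul, neg_mul, neg_neg, Finset.sum_mul, Finset.sum_mul]
      exact Finset.sum_congr rfl fun _ _ => by ring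
    simp only [this, mul_neg, Finset.sum_neg_distrib, I, neg_zero, mul_zero]
  · intro i
    refine Finset.sum_eq_zero fun m _ => Finset.sum_eq_zero fun p _ =>
      Finset.sum_eq_zero fun q _ => ?_
    simp only [tAux]
    rw [sum_tAux x (fun n r s t u => A m n r * M p s * B q t u)]
    have : ∀ r s t u, ∑ n, x n * (A m n r * M p s * B q t u) = (M m r * M p s * B q t u) := by
      intro r s t u
      rw [← h4 m r, Finset.sum_mul, Finset.sum_mul]
      exact Finset.sum_congr rfl fun _ _ => by ring
    simp only [this, I, mul_zero]
  · intro i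
    refine Finset.sum_eq_zero fun m _ => Finset.sum_eq_zero fun n _ =>
      Finset.sum_eq_zero fun q _ => ?_
    simp only [tAux]
    rw [sum_tAux x (fun p r s t u => A m n r * M p s * B q t u)]
    have : ∀ r s t u, ∑ p, x p * (A m n r * M p s * B q t u) = 0 := by
      intro r s t u
      rw [← zero_mul (A m n r * B q t u), ← hM' s, Finset.sum_mul]
      exact Finset.sum_congr rfl fun _ _ => by ring
    simp only [this, mul_zero, Finset.sum_const_zero]
  · intro i
    refine Finset.sum_eq_zero fun m _ => Finset.sum_eq_zero fun n _ =>
      Finset.sum_eq_zero fun p _ => ?_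
    simp only [tAux]
    rw [sum_tAux x (fun q r s t u => A m n r * M p s * B q t u)]
    have : ∀ r s t u, ∑ q, x q * (A m n r * M p s * B q t u) = 0 := by
      intro r s t u
      rw [← zero_mul (A m n r * M p s), ← h0 t u, Finset.sum_mul]
      exact Finset.sum_congr rfl fun _ _ => by ring
    simp only [this, mul_zero, Finset.sum_const_zero]

lemma bSgn_swap (a b : Fin 4) : bSgn a b = - bSgn b a := by
  fin_cases a <;> fin_cases b <;> simp [bSgn]

lemma bIdx_swap : ∀ a b : Fin 4, bIdx a b = bIdx b a := by decide

lemma ginv_swap1 (G : Fin 4 → Fin 4 → Fin 4 → Fin 4 → ℝ) (a b c d : Fin 4) :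
    ginv G a b c d = - ginv G b a c d := by
  simp only [ginv, fromPetrov]; rw [bSgn_swap a b, bIdx_swap a b]; ring

lemma ginv_swap2 (G : Fin 4 → Fin 4 → Fin 4 → Fin 4 → ℝ) (a b c d : Fin 4) :
    ginv G a b c d = - ginv G a b d c := by
  simp only [ginv, fromPetrov]; rw [bSgn_swap c d, bIdx_swap c d]; ring

/-- A bilinear contraction of an antisymmetric array with a vector vanishes. -/
lemma antisymm_zero (x : Fin 4 → ℝ) (f : Fin 4 → Fin 4 → ℝ) (hf : ∀ a b, f a b = - f b a) :
    ∑ a, ∑ b, f a b * x a * x b = 0 := by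
  have : ∑ a, ∑ b, f a b * x a * x b = - ∑ a, ∑ b, f a b * x a * x b := by
    conv_lhs => rw [Finset.sum_comm]
    simp only [← Finset.sum_neg_distrib]
    refine Finset.sum_congr rfl fun a _ => Finset.sum_congr rfl fun b _ => ?_
    rw [hf b a]; ring
  linarith

lemma factor_sum (v : ℝ) (f h x : Fin 4 → ℝ) (g : Fin 4 → Fin 4 → ℝ) :
    ∑ a, ∑ b, ∑ c, ∑ d, v * f a * g b c * h d * x a * x b * x c * x d =
      v * ((∑ a, f a * x a) * (∑ b, ∑ c, g b c * x b * x c) * (∑ d, h d * x d)) := by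
  simp only [Finset.mul_sum, Finset.sum_mul]
  have comm4 : ∀ F : Fin 4 → Fin 4 → Fin 4 → Fin 4 → ℝ,
      ∑ d, ∑ b, ∑ c, ∑ a, F a b c d = ∑ a, ∑ b, ∑ c, ∑ d, F a b c d := by
    intro F; simp only [Fin.sum_univ_four]; ring
  rw [comm4 (fun a b c d => v * (f a * x a * (g b c * x b * x c) * (h d * x d)))]
  refine Finset.sum_congr rfl fun a _ => ?_
  refine Finset.sum_congr rfl fun b _ => ?_
  refine Finset.sum_congr rfl fun c _ => ?_
  refine Finset.sum_congr rfl fun d _ => ?_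
  ring

/-- Let `G` be an area metric on `ℝ⁴` and `ξ` a covector.  If the `4 × 4`
matrix `M^{ab} = (G⁻¹)^{acbd} ξ_c ξ_d` has rank `< 3`, then `𝒢(ξ,ξ,ξ,ξ) = 0`. -/
theorem low_rank_implies_null
    (G : Fin 4 → Fin 4 → Fin 4 → Fin 4 → ℝ)
    (hsym : ∀ a b c d, G a b c d = G c d a b)
    (hasym : ∀ a b c d, G a b c d = - G b a c d)
    (hinv : IsUnit (petrov G).det)
    (ξ : Fin 4 → ℝ)
    (hrank : (Matrix.of fun a b : Fin 4 =>
        ∑ c : Fin 4, ∑ d : Fin 4, ginv G a c b d * ξ c * ξ d).rank < 3) :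
    fresnelPoly G ξ = 0 := by
  by_cases hx : ξ = 0
  · subst hx
    simp [fresnelPoly]
  set M : Matrix (Fin 4) (Fin 4) ℝ := Matrix.of fun a b : Fin 4 =>
        ∑ c : Fin 4, ∑ d : Fin 4, ginv G a c b d * ξ c * ξ d with hMdef
  have Mv : ∀ a b, M a b = ∑ c : Fin 4, ∑ d : Fin 4, ginv G a c b d * ξ c * ξ d :=
    fun a b => rfl
  have key := outer_zero ξ hx M hrank ?_ ?_ (fun m n r => ∑ a, ginv G m n r a * ξ a)
    (fun q t u => ∑ d, ginv G d q t u * ξ d) ?_ ?_ ?_ ?_ ?_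
  · have hN : ∀ p s, ∑ b, ∑ c, ginv G b p s c * ξ b * ξ c = - M p s := by
      intro p s
      rw [Mv]
      simp only [← Finset.sum_neg_distrib]
      refine Finset.sum_congr rfl fun b _ => Finset.sum_congr rfl fun c _ => ?_
      rw [ginv_swap1]; ring
    unfold fresnelPoly
    simp only [factor_sum, hN]
    refine mul_eq_zero_of_right _ ?_
    rw [← mul_zero (-(|(petrov G).det| ^ ((1 : ℝ) / 6) * |(petrov G).det| ^ ((1 : ℝ) / 6))),
      ← key, Finset.mul_sum]
    refine Finset.sum_congr rfl fun m _ => ?_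
    rw [Finset.mul_sum]
    refine Finset.sum_congr rfl fun n _ => ?_
    rw [Finset.mul_sum]
    refine Finset.sum_congr rfl fun p _ => ?_
    rw [Finset.mul_sum]
    refine Finset.sum_congr rfl fun q _ => ?_
    unfold tAux vol
    rw [← mul_assoc, Finset.mul_sum]
    refine Finset.sum_congr rfl fun r _ => ?_
    rw [Finset.mul_sum]
    refine Finset.sum_congr rfl fun s _ => ?_
    rw [Finset.mul_sum]
    refine Finset.sum_congr rfl fun t _ => ?_
    rw [Finset.mul_sum]
    refine Finset.sum_congr rfl fun u _ => ?_
    ring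
  · intro a
    simp only [Mv, Finset.mul_sum]
    rw [Finset.sum_comm]
    refine Finset.sum_eq_zero fun c _ => ?_
    rw [← antisymm_zero ξ (fun r d => ξ c * ginv G a c r d)
      (fun r d => by rw [ginv_swap2]; ring)]
    exact Finset.sum_congr rfl fun r _ => Finset.sum_congr rfl fun d _ => by ring
  · intro a
    simp only [Mv, Finset.mul_sum]
    have e : ∀ r, ∑ c, ∑ d, ξ r * (ginv G r c a d * ξ c * ξ d) =
        ∑ d, ∑ c, ξ r * (ginv G r c a d * ξ c * ξ d) := fun r => Finset.sum_comm
    simp only [e]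
    rw [Finset.sum_comm]
    refine Finset.sum_eq_zero fun d _ => ?_
    rw [← antisymm_zero ξ (fun r c => ξ d * ginv G r c a d)
      (fun r c => by rw [ginv_swap1]; ring)]
    exact Finset.sum_congr rfl fun r _ => Finset.sum_congr rfl fun c _ => by ring
  · intro t u
    simp only [Finset.mul_sum]
    rw [← antisymm_zero ξ (fun q d => ginv G d q t u) (fun q d => by rw [ginv_swap1])]
    exact Finset.sum_congr rfl fun r _ => Finset.sum_congr rfl fun c _ => by ring
  · intro q u
    simp only [Mv, Finset.mul_sum]
    rw [Finset.sum_comm]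
    refine Finset.sum_congr rfl fun c _ => Finset.sum_congr rfl fun d _ => ?_
    rw [ginv_swap1 G c q, ginv_swap2 G q c]; ring
  · intro q t
    simp only [Mv, Finset.mul_sum, ← Finset.sum_neg_distrib]
    rw [Finset.sum_comm]
    refine Finset.sum_congr rfl fun c _ => Finset.sum_congr rfl fun d _ => ?_
    rw [ginv_swap1 G c q]; ring
  · intro n r
    simp only [Mv, Finset.mul_sum, ← Finset.sum_neg_distrib]
    refine Finset.sum_congr rfl fun c _ => Finset.sum_congr rfl fun d _ => ?_
    rw [ginv_swap1 G c n]; ring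
  · intro m r
    simp only [Mv, Finset.mul_sum]
    refine Finset.sum_congr rfl fun c _ => Finset.sum_congr rfl fun d _ => ?_
    ring

end
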